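/- Let Γ := ℝ³ with componentwise addition and the lexicographic order, with coordinate projections π_1, π_2, π_3 : Γ → ℝ, and let x̃ be a Hahn series in HahnSeries Γ ℝ whose support is finite. For real numbers μ, ν > 0, define x ∈ HahnSeries ℝ ℝ as the series whose coefficient at β ∈ ℝ equals Σ_{α ∈ supp(x̃), π_1(α) = β} (coefficient of x̃ at α)·μ^{π_2(α)}·ν^{π_3(α)}. Then there exists ν₀ > 0 such that for every ν with 0 < ν < ν₀ there exists μ₀ > 0 such that for every μ with 0 < μ < μ₀ the following hold: x = 0 if and only if x̃ = 0, and if x̃ ≠ 0 then the order of x equals π_1 applied to the order of x̃, and the leading coefficient of x has the same strict sign (positive, respectively negative) as the leading coefficient of x̃. -/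

import Mathlib

/-- The value group `Γ = ℝ³` with componentwise addition and the lexicographic order. -/
abbrev Γ₃ : Type := ℝ ×ₗ ℝ ×ₗ ℝ

/-- First coordinate projection `π₁ : Γ₃ → ℝ`. -/
def pi1 (g : Γ₃) : ℝ := (ofLex g).1
/-- Second coordinate projection `π₂ : Γ₃ → ℝ`. -/
def pi2 (g : Γ₃) : ℝ := (ofLex (ofLex g).2).1
/-- Third coordinate projection `π₃ : Γ₃ → ℝ`. -/
def pi3 (g : Γ₃) : ℝ := (ofLex (ofLex g).2).2

/-!
Dividing by the lowest power, a finite sum `∑ aᵢ t ^ eᵢ` has, as `t → 0⁺`, the sign of the sum of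
the coefficients with the lowest exponent, provided that this sum is nonzero. Applied in `μ`, this
leaves the terms of lowest `π₂`; applied in `ν` to these, it leaves the one of lowest `π₃`. Hence
the coefficient of `x` at `π₁ (order xt)` is nonzero with the sign of the leading coefficient of
`xt`, and `x` has no lower terms because `π₁` is monotone.
-/

open Filter Topology

lemma sign_eq_sign_iff_pos_iff_and_neg_iff {R : Type*} [Zero R] [LinearOrder R] {a b : R} :
    SignType.sign a = SignType.sign b ↔ (0 < a ↔ 0 < b) ∧ (a < 0 ↔ b < 0) := by
  simp only [← sign_eq_one_iff, ← sign_eq_neg_one_iff]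
  generalize SignType.sign a = σ, SignType.sign b = τ
  decide +revert

section RealExponents

variable {ι : Type*} {s : Finset ι} {a : ι → ℝ}

lemma tendsto_sum_mul_rpow_nhdsGT_zero {e : ι → ℝ} (he : ∀ i ∈ s, 0 ≤ e i) :
    Tendsto (fun t : ℝ ↦ ∑ i ∈ s, a i * t ^ e i) (𝓝[>] 0) (𝓝 (∑ i ∈ s with e i = 0, a i)) := by
  have hcont : ContinuousAt (fun t : ℝ ↦ ∑ i ∈ s, a i * t ^ e i) 0 :=
    tendsto_finsetSum _ fun i hi ↦
      (Real.continuousAt_rpow_const 0 (e i) (.inr (he i hi))).const_mul (a i)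
  have hvalue : ∑ i ∈ s, a i * (0 : ℝ) ^ e i = ∑ i ∈ s with e i = 0, a i := by
    rw [Finset.sum_filter]
    refine Finset.sum_congr rfl fun i _ ↦ ?_
    split_ifs with hi <;> simp [hi]
  exact hvalue ▸ hcont.tendsto.mono_left nhdsWithin_le_nhds

lemma eventually_sign_sum_mul_rpow_eq {e : ι → ℝ} {m : ℝ} (hm : ∀ i ∈ s, m ≤ e i)
    (hlead : ∑ i ∈ s with e i = m, a i ≠ 0) :
    ∀ᶠ t in 𝓝[>] (0 : ℝ),
      SignType.sign (∑ i ∈ s, a i * t ^ e i) = SignType.sign (∑ i ∈ s with e i = m, a i) := by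
  have hlim : Tendsto (fun t : ℝ ↦ ∑ i ∈ s, a i * t ^ (e i - m)) (𝓝[>] 0)
      (𝓝 (∑ i ∈ s with e i = m, a i)) := by
    simpa only [sub_eq_zero] using
      tendsto_sum_mul_rpow_nhdsGT_zero fun i hi ↦ sub_nonneg.2 (hm i hi)
  have hsign := (continuousAt_sign_of_ne_zero hlead).tendsto.comp hlim
  rw [nhds_discrete, tendsto_pure] at hsign
  filter_upwards [hsign, self_mem_nhdsWithin] with t ht (htpos : 0 < t)
  have hfactor : ∑ i ∈ s, a i * t ^ e i = t ^ m * ∑ i ∈ s, a i * t ^ (e i - m) := by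
    rw [Finset.mul_sum]
    refine Finset.sum_congr rfl fun i _ ↦ ?_
    rw [mul_left_comm, ← Real.rpow_add htpos, add_sub_cancel]
  rw [hfactor, sign_mul, sign_pos (Real.rpow_pos_of_pos htpos m), one_mul]
  exact ht

lemma eventually_eventually_sign_sum_mul_rpow_mul_rpow_eq {e : ι → ℝ ×ₗ ℝ} {j : ι} (hj : j ∈ s)
    (haj : a j ≠ 0) (hlt : ∀ i ∈ s, i ≠ j → e j < e i) :
    ∀ᶠ ν in 𝓝[>] (0 : ℝ), ∀ᶠ μ in 𝓝[>] (0 : ℝ),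
      SignType.sign (∑ i ∈ s, a i * μ ^ (ofLex (e i)).1 * ν ^ (ofLex (e i)).2) =
        SignType.sign (a j) := by
  have hle : ∀ i ∈ s, e j ≤ e i := fun i hi ↦
    (eq_or_ne i j).elim (fun hij ↦ hij ▸ le_rfl) fun hij ↦ (hlt i hi hij).le
  set S := s.filter fun i ↦ (ofLex (e i)).1 = (ofLex (e j)).1 with hS
  have hsingleton : S.filter (fun i ↦ (ofLex (e i)).2 = (ofLex (e j)).2) = {j} := by
    refine Finset.eq_singleton_iff_unique_mem.2 ⟨by simp [hS, hj], fun i hi ↦ ?_⟩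
    simp only [hS, Finset.mem_filter] at hi
    obtain ⟨⟨his, hfst⟩, hsnd⟩ := hi
    by_contra hij
    exact (hlt i his hij).ne' (ofLex.injective (Prod.ext hfst hsnd))
  have hsnd : ∀ i ∈ S, (ofLex (e j)).2 ≤ (ofLex (e i)).2 := fun i hi ↦ by
    obtain ⟨his, hfst⟩ := Finset.mem_filter.1 hi
    exact (Prod.Lex.le_iff'.1 (hle i his)).2 hfst.symm
  have hν := eventually_sign_sum_mul_rpow_eq (a := a) hsnd (by simpa [hsingleton] using haj)
  rw [hsingleton, Finset.sum_singleton] at hν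
  filter_upwards [hν] with ν hν
  have hlead : ∑ i ∈ S, a i * ν ^ (ofLex (e i)).2 ≠ 0 := by
    rwa [← sign_ne_zero, hν, sign_ne_zero]
  have hμ := eventually_sign_sum_mul_rpow_eq
    (fun i hi ↦ Prod.Lex.monotone_fst_ofLex (hle i hi)) hlead
  filter_upwards [hμ] with μ hμ
  rw [← hν, ← hμ]
  simp only [mul_right_comm]

end RealExponents

section HahnSeries

variable {Γ : Type*} [LinearOrder Γ] [Zero Γ]

lemma hahnSeries_order_eq_of_forall_le {R : Type*} [Zero R] {x : HahnSeries Γ R} {g : Γ}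
    (hg : x.coeff g ≠ 0) (hle : ∀ g', x.coeff g' ≠ 0 → g ≤ g') : x.order = g :=
  (HahnSeries.order_le_of_coeff_ne_zero hg).antisymm <|
    hle _ <| HahnSeries.coeff_order_eq_zero.not.2 fun hx ↦ hg <| by simp [hx]

lemma hahnSeries_order_eq_of_coeff_eq_sum_fiber {ι R : Type*} [AddCommMonoid R]
    {x : HahnSeries Γ R} {s : Finset ι} {f : ι → Γ} {c : ι → R} {j : ι}
    (hx : ∀ β, x.coeff β = ∑ i ∈ s, if f i = β then c i else 0)
    (hj : x.coeff (f j) ≠ 0) (hle : ∀ i ∈ s, f j ≤ f i) : x.order = f j := by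
  refine hahnSeries_order_eq_of_forall_le hj fun β hβ ↦ ?_
  rw [hx] at hβ
  obtain ⟨i, hi, hne⟩ := Finset.exists_ne_zero_of_sum_ne_zero hβ
  obtain ⟨rfl, -⟩ := ite_ne_right_iff.1 hne
  exact hle i hi

lemma eventually_eventually_sign_sum_fiber_order_eq {xt : HahnSeries (Γ ×ₗ ℝ ×ₗ ℝ) ℝ}
    (hfin : xt.support.Finite) (hxt : xt ≠ 0) :
    ∀ᶠ ν in 𝓝[>] (0 : ℝ), ∀ᶠ μ in 𝓝[>] (0 : ℝ),
      SignType.sign (∑ α ∈ hfin.toFinset with (ofLex α).1 = (ofLex xt.order).1,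
        xt.coeff α * μ ^ (ofLex (ofLex α).2).1 * ν ^ (ofLex (ofLex α).2).2) =
      SignType.sign xt.leadingCoeff := by
  have hlead : xt.coeff xt.order ≠ 0 := HahnSeries.coeff_order_eq_zero.not.2 hxt
  rw [HahnSeries.leadingCoeff_eq]
  refine eventually_eventually_sign_sum_mul_rpow_mul_rpow_eq (a := xt.coeff)
    (e := fun α ↦ (ofLex α).2) (j := xt.order) ?_ hlead fun α hα hne ↦ ?_
  · exact Finset.mem_filter.2 ⟨hfin.mem_toFinset.2 hlead, rfl⟩
  obtain ⟨hα, hfst⟩ := Finset.mem_filter.1 hα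
  have hlt : xt.order < α :=
    (HahnSeries.order_le_of_coeff_ne_zero (hfin.mem_toFinset.1 hα)).lt_of_ne' hne
  exact (Prod.Lex.lt_iff'.1 hlt).2 hfst.symm

theorem hahn_projection_order_sign_general (xt : HahnSeries (Γ ×ₗ ℝ ×ₗ ℝ) ℝ)
    (hfin : xt.support.Finite) :
    ∀ᶠ ν in 𝓝[>] (0 : ℝ), ∀ᶠ μ in 𝓝[>] (0 : ℝ), ∀ x : HahnSeries Γ ℝ,
      (∀ β : Γ, x.coeff β = ∑ α ∈ hfin.toFinset, if (ofLex α).1 = β then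
        xt.coeff α * μ ^ (ofLex (ofLex α).2).1 * ν ^ (ofLex (ofLex α).2).2 else 0) →
      (x = 0 ↔ xt = 0) ∧ (xt ≠ 0 → x.order = (ofLex xt.order).1 ∧
        SignType.sign xt.leadingCoeff = SignType.sign x.leadingCoeff) := by
  rcases eq_or_ne xt 0 with rfl | hxt
  · refine .of_forall fun ν ↦ .of_forall fun μ x hx ↦ ⟨?_, fun h ↦ absurd rfl h⟩
    exact iff_of_true (HahnSeries.ext (funext fun β ↦ by simp [hx])) rfl
  filter_upwards [eventually_eventually_sign_sum_fiber_order_eq hfin hxt] with ν hν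
  filter_upwards [hν] with μ hsign x hx
  rw [Finset.sum_filter, ← hx] at hsign
  have hcoeff : x.coeff (ofLex xt.order).1 ≠ 0 := by
    rwa [← sign_ne_zero, hsign, sign_ne_zero, HahnSeries.leadingCoeff_ne_zero]
  have horder : x.order = (ofLex xt.order).1 :=
    hahnSeries_order_eq_of_coeff_eq_sum_fiber hx hcoeff fun α hα ↦
      Prod.Lex.monotone_fst_ofLex <|
        HahnSeries.order_le_of_coeff_ne_zero (hfin.mem_toFinset.1 hα)
  refine ⟨iff_of_false (fun h ↦ hcoeff (by simp [h])) hxt, fun _ ↦ ⟨horder, ?_⟩⟩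
  rw [x.leadingCoeff_eq, horder, hsign]

end HahnSeries

/-- let `xt` be a Hahn series over `Γ₃` with finite support, and for
`μ, ν > 0` let `x` be the Hahn series over `ℝ` whose coefficient at `β` is
`∑_{α ∈ supp xt, π₁ α = β} (xt.coeff α)·μ^{π₂ α}·ν^{π₃ α}` (real powers).  Then for all
sufficiently small `ν > 0` and then all sufficiently small `μ > 0` (depending on `ν`):
`x = 0` iff `xt = 0`, and if `xt ≠ 0` then the order of `x` is `π₁` of the order of `xt`
and the leading coefficients of `x` and `xt` have the same strict sign. -/
theorem hahn_projection_order_sign (xt : HahnSeries Γ₃ ℝ)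
    (hfin : xt.support.Finite) :
    ∃ ν₀ : ℝ, 0 < ν₀ ∧ ∀ ν : ℝ, 0 < ν → ν < ν₀ →
      ∃ μ₀ : ℝ, 0 < μ₀ ∧ ∀ μ : ℝ, 0 < μ → μ < μ₀ →
        ∀ x : HahnSeries ℝ ℝ,
          (∀ β : ℝ, x.coeff β =
            ∑ α ∈ hfin.toFinset,
              if pi1 α = β then xt.coeff α * μ ^ (pi2 α) * ν ^ (pi3 α) else 0) →
          ((x = 0 ↔ xt = 0) ∧
            (xt ≠ 0 →
              x.order = pi1 xt.order ∧
              (0 < xt.coeff xt.order ↔ 0 < x.coeff x.order) ∧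
              (xt.coeff xt.order < 0 ↔ x.coeff x.order < 0))) := by
  have h := hahn_projection_order_sign_general xt hfin
  simp only [(nhdsGT_basis (0 : ℝ)).eventually_iff, Set.mem_Ioo, and_imp,
    sign_eq_sign_iff_pos_iff_and_neg_iff, HahnSeries.leadingCoeff_eq] at h
  exact h
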